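/- Let d ≥ 1, ε > 0 and a > 0. Define ν : ℤ^d → [0,∞) by ν_0 := a and, for x ≠ 0, ν_x := a · E_x[ 1{τ_0 < ∞} (1 + ε a)^{−τ_0} ], where τ_0 is the first hitting time of 0 by the simple random walk started at x. Then ν satisfies the balance equation with parameter ε: (1 + ε a) ν_x = (1/(2d)) Σ_{i=1}^d (ν_{x+e_i} + ν_{x−e_i}) for all x ∈ ℤ^d, x ≠ 0. -/

import Mathlib

open Finset

namespace CBRW

/-- The `i`-th canonical basis vector of `ℤ^d`. -/
def e (d : ℕ) (i : Fin d) : Fin d → ℤ := Pi.single i 1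

/-- The step of the simple random walk corresponding to the direction `(i, b)`:
`+e_i` if `b = true`, `-e_i` if `b = false`. -/
def dir (d : ℕ) (s : Fin d × Bool) : Fin d → ℤ := if s.2 then e d s.1 else -(e d s.1)

/-- The position at time `j` of the simple random walk started at `x` and driven by the
word of increments `w` (of length `k`); only the first `j` letters of `w` are used. -/
def posAt (d : ℕ) {k : ℕ} (x : Fin d → ℤ) (w : Fin k → Fin d × Bool) (j : ℕ) :
    Fin d → ℤ :=
  x + ∑ i : Fin k, if (i : ℕ) < j then dir d (w i) else 0

open Classical in
/-- `ℙ_x(τ_y = k)`: the probability that the simple random walk on `ℤ^d` started at `x`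
first visits `y` at time `k` (meaningful for `k ≥ 1`). -/
noncomputable def firstHitProb (d : ℕ) (x y : Fin d → ℤ) (k : ℕ) : ℝ :=
  ((Finset.univ.filter (fun w : Fin k → Fin d × Bool =>
      (∀ j, 1 ≤ j → j < k → posAt d x w j ≠ y) ∧ posAt d x w k = y)).card : ℝ) /
    (2 * (d : ℝ)) ^ k

open Classical in
/-- `ℙ_x(τ_y ≥ k + 1)`: the probability that the simple random walk on `ℤ^d` started at `x`
avoids `y` at all times `1, …, k`. -/
noncomputable def avoidProb (d : ℕ) (x y : Fin d → ℤ) (k : ℕ) : ℝ :=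
  ((Finset.univ.filter (fun w : Fin k → Fin d × Bool =>
      ∀ j, 1 ≤ j → j ≤ k → posAt d x w j ≠ y)).card : ℝ) / (2 * (d : ℝ)) ^ k

/-- `γ_d = ℙ_0(τ_0 = ∞)`: the probability that the simple random walk started at `0`
never returns to `0`. -/
noncomputable def gamma (d : ℕ) : ℝ := 1 - ∑' k : ℕ, firstHitProb d 0 0 (k + 1)

/-- `E_x[𝟙_{τ_y < ∞} (1 + u)^{-τ_y}]` for the simple random walk started at `x`. -/
noncomputable def hitGen (d : ℕ) (x y : Fin d → ℤ) (u : ℝ) : ℝ :=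
  ∑' k : ℕ, firstHitProb d x y (k + 1) * ((1 + u) ^ (k + 1))⁻¹

/-- `ν` satisfies the balance equation with parameter `ε`:
`(1 + ε ν 0) ν x = (1/(2d)) ∑ i (ν (x + e i) + ν (x - e i))` for all `x ≠ 0`. -/
def BalanceEq (d : ℕ) (ε : ℝ) (ν : (Fin d → ℤ) → ℝ) : Prop :=
  ∀ x : Fin d → ℤ, x ≠ 0 →
    (1 + ε * ν 0) * ν x =
      (1 / (2 * (d : ℝ))) * ∑ i : Fin d, (ν (x + e d i) + ν (x - e d i))

/-- `ν` is a probability measure on `ℤ^d`, identified with a nonnegative function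
summing to `1`. -/
def IsProbMeasure (d : ℕ) (ν : (Fin d → ℤ) → ℝ) : Prop :=
  (∀ x, 0 ≤ ν x) ∧ HasSum ν 1

end CBRW

namespace CBRW

lemma posAt_zero' (d : ℕ) {k : ℕ} (x : Fin d → ℤ) (w : Fin k → Fin d × Bool) :
    posAt d x w 0 = x := by
  simp [posAt]

lemma posAt_cons (d : ℕ) {k : ℕ} (x : Fin d → ℤ) (s : Fin d × Bool)
    (w : Fin k → Fin d × Bool) (j : ℕ) :
    posAt d x (Fin.cons s w : Fin (k + 1) → Fin d × Bool) (j + 1) = posAt d (x + dir d s) w j := by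
  simp [posAt, Fin.sum_univ_succ, add_assoc]

/-- First-hit probabilities with the convention that the hitting time is `0` at the origin. -/
noncomputable def hit0 (d : ℕ) (y : Fin d → ℤ) (k : ℕ) : ℝ :=
  if y = 0 then (if k = 0 then 1 else 0) else firstHitProb d y 0 k

open Classical in
lemma hit0_eq (d : ℕ) (hd : 1 ≤ d) (y : Fin d → ℤ) (k : ℕ) :
    hit0 d y k = ((Finset.univ.filter (fun w : Fin k → Fin d × Bool =>
      (∀ j, j < k → posAt d y w j ≠ 0) ∧ posAt d y w k = 0)).card : ℝ) / (2 * (d : ℝ)) ^ k := by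
  unfold hit0
  split_ifs with hy hk
  · subst hk
    rw [Finset.filter_true_of_mem]
    · simp
    · intro w _
      exact ⟨by simp, by rw [posAt_zero', hy]⟩
  · rw [Finset.filter_false_of_mem]
    · simp
    · intro w _ h
      exact h.1 0 (by omega) (by rw [posAt_zero', hy])
  · unfold firstHitProb
    congr 3
    ext w
    simp only [Finset.mem_filter, Finset.mem_univ, true_and]
    refine and_congr_left fun _ => ⟨fun h j hj => ?_, fun h j _ hj => h j hj⟩
    rcases Nat.eq_zero_or_pos j with rfl | h0
    · rw [posAt_zero']; exact hy
    · exact h j h0 hj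

open Classical in
lemma firstHit_succ (d : ℕ) (hd : 1 ≤ d) (x : Fin d → ℤ) (k : ℕ) :
    firstHitProb d x 0 (k + 1) =
      (1 / (2 * (d : ℝ))) * ∑ s : Fin d × Bool, hit0 d (x + dir d s) k := by
  have hd' : (d : ℝ) ≠ 0 := by positivity
  simp_rw [hit0_eq d hd]
  rw [← Finset.sum_div, firstHitProb]
  have key : (Finset.univ.filter (fun w : Fin (k + 1) → Fin d × Bool =>
      (∀ j, 1 ≤ j → j < k + 1 → posAt d x w j ≠ 0) ∧ posAt d x w (k + 1) = 0)).card =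
      ∑ s : Fin d × Bool, (Finset.univ.filter (fun w : Fin k → Fin d × Bool =>
      (∀ j, j < k → posAt d (x + dir d s) w j ≠ 0) ∧ posAt d (x + dir d s) w k = 0)).card := by
    simp_rw [Finset.card_filter]
    rw [← (Fin.consEquiv (fun _ : Fin (k + 1) => Fin d × Bool)).sum_comp, Fintype.sum_prod_type]
    refine Finset.sum_congr rfl fun s _ => Finset.sum_congr rfl fun w _ => ?_
    congr 1
    simp only [Fin.consEquiv, Equiv.coe_fn_mk, posAt_cons, eq_iff_iff]
    refine and_congr_left fun _ => ⟨fun h j hj => ?_, fun h j h1 hj => ?_⟩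
    · have := h (j + 1) (by omega) (by omega)
      rwa [posAt_cons] at this
    · obtain ⟨j, rfl⟩ : ∃ i, j = i + 1 := ⟨j - 1, by omega⟩
      rw [posAt_cons]
      exact h j (by omega)
  rw [key]
  push_cast
  field_simp
  ring

lemma hit0_nonneg (d : ℕ) (hd : 1 ≤ d) (y : Fin d → ℤ) (k : ℕ) : 0 ≤ hit0 d y k := by
  rw [hit0_eq d hd]; positivity

lemma hit0_le_one (d : ℕ) (hd : 1 ≤ d) (y : Fin d → ℤ) (k : ℕ) : hit0 d y k ≤ 1 := by
  classical
  rw [hit0_eq d hd]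
  have hd' : (0 : ℝ) < d := by positivity
  rw [div_le_one (by positivity)]
  refine (Nat.cast_le.mpr (Finset.card_le_univ _)).trans ?_
  simp [mul_comm]

lemma summable_hit0 (d : ℕ) (hd : 1 ≤ d) (y : Fin d → ℤ) (u : ℝ) (hu : 0 < u) :
    Summable fun k => hit0 d y k * ((1 + u) ^ k)⁻¹ := by
  refine Summable.of_nonneg_of_le (fun k => ?_) (fun k => ?_)
    (summable_geometric_of_lt_one (r := (1 + u)⁻¹) (by positivity)
      (inv_lt_one_of_one_lt₀ (by linarith)))
  · have := hit0_nonneg d hd y k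
    positivity
  · rw [inv_pow]
    exact mul_le_of_le_one_left (by positivity) (hit0_le_one d hd y k)

lemma tsum_hit0 (d : ℕ) (hd : 1 ≤ d) (y : Fin d → ℤ) (u : ℝ) (hu : 0 < u) :
    ∑' k, hit0 d y k * ((1 + u) ^ k)⁻¹ = if y = 0 then 1 else hitGen d y 0 u := by
  rw [(summable_hit0 d hd y u hu).tsum_eq_zero_add]
  split_ifs with hy
  · simp [hit0, hy]
  · have h0 : hit0 d y 0 = 0 := by
      classical
      rw [hit0_eq d hd]
      simp [posAt, hy]
    rw [h0]
    simp [hitGen, hit0, hy]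

lemma hitGen_step (d : ℕ) (hd : 1 ≤ d) (x : Fin d → ℤ) (u : ℝ) (hu : 0 < u) :
    (1 + u) * hitGen d x 0 u = (1 / (2 * (d : ℝ))) *
      ∑ s : Fin d × Bool, if x + dir d s = 0 then 1 else hitGen d (x + dir d s) 0 u := by
  simp_rw [← tsum_hit0 d hd _ u hu]
  rw [← Summable.tsum_finsetSum (fun s _ => summable_hit0 d hd _ u hu), hitGen,
    ← tsum_mul_left, ← tsum_mul_left]
  refine tsum_congr fun k => ?_
  rw [firstHit_succ d hd, ← Finset.sum_mul, pow_succ]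
  have : (1 + u) ≠ 0 := by positivity
  field_simp

end CBRW

open CBRW in
/-- The measure defined by `ν 0 = a` and `ν x = a · E_x[𝟙_{τ_0<∞}(1 + ε a)^{-τ_0}]` for
`x ≠ 0` satisfies the balance equation with parameter `ε`. -/
theorem discounted_hitting_satisfies_balance
    (d : ℕ) (hd : 1 ≤ d) (ε a : ℝ) (hε : 0 < ε) (ha : 0 < a)
    (ν : (Fin d → ℤ) → ℝ)
    (hν : ∀ x : Fin d → ℤ, ν x = if x = 0 then a else a * hitGen d x 0 (ε * a)) :
    BalanceEq d ε ν := by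
  intro x hx
  have h0 : ν 0 = a := by simp [hν]
  have hy : ∀ y, ν y = a * (if y = 0 then 1 else hitGen d y 0 (ε * a)) := by
    intro y; rw [hν]; split_ifs <;> simp
  have step := hitGen_step d hd x (ε * a) (by positivity)
  rw [h0, hy x, if_neg hx, mul_left_comm, step, Fintype.sum_prod_type, mul_left_comm,
    Finset.mul_sum]
  congr 1
  refine Finset.sum_congr rfl fun i _ => ?_
  rw [hy, hy, Fintype.sum_bool]
  simp [dir, mul_add, sub_eq_add_neg]
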